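/- arXiv:1910.00485 — 2 statements merged into one kernel-verified Lean document; each statement's English description precedes it below -/
import Mathlib

section
/- There is a unique x_⋆ in the interval [1/6, 1/4] satisfying 2(1−3x_⋆)·log 2 − H_2(2x_⋆) = 0, and for every integer t ≥ 2 the t-wide diamond C(1,t,1) satisfies c_⋆(C(1,t,1)) = (1−2x_⋆)·log 2 (≈ 0.389429). -/
open Classical in
/-- The finset of all antichains (including the empty antichain) of a finite poset `P`. -/
noncomputable def antichains (P : Type*) [Fintype P] [PartialOrder P] : Finset (Finset P) :=
  Finset.univ.filter (fun A => IsAntichain (· ≤ ·) (A : Set P))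

/-- The upper shadow `∂_Q S` of an antichain `S` of `P` inside a subset `Q ⊆ P`. -/
def upperShadow {P : Type*} [PartialOrder P] (Q : Set P) (S : Set P) : Set P :=
  {y | y ∈ Q ∧ (∃ x ∈ S, x ≤ y) ∧ ∀ z ∈ Q, z < y → ∀ x ∈ S, ¬ x ≤ z}

open Classical in
/-- The antichains of the subposet `Q ⊆ P`, i.e. antichains of `P` contained in `Q`. -/
noncomputable def antichainsIn {P : Type*} [Fintype P] [PartialOrder P] (Q : Set P) :
    Finset (Finset P) :=
  (antichains P).filter (fun A => (A : Set P) ⊆ Q)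

/-- A weighting `α ∈ Δ_{a(P)}`: a nonnegative function on the antichains of `P`
(extended by `0` off the antichains) summing to `1`. -/
def IsWeighting {P : Type*} [Fintype P] [PartialOrder P] (α : Finset P → ℝ) : Prop :=
  (∀ A ∈ antichains P, 0 ≤ α A) ∧ (∀ A ∉ antichains P, α A = 0) ∧
    ∑ A ∈ antichains P, α A = 1

open Classical in
/-- The shadow weighting `∂_Q(α)`: the coordinate of `∂_Q(α)` at an antichain `T` of `Q`
is the sum of `α` over all antichains of `P` whose upper shadow in `Q` is `T`. -/
noncomputable def shadowWeight {P : Type*} [Fintype P] [PartialOrder P]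
    (α : Finset P → ℝ) (Q : Set P) (T : Finset P) : ℝ :=
  ∑ A ∈ (antichains P).filter (fun B : Finset P => upperShadow Q (B : Set P) = (T : Set P)), α A

/-- The critical exponent `c_{α,P}(Q) = H_{a(Q)}(∂_Q(α)) / |Q|` of a subposet `Q` of `P`
with respect to a weighting `α` (natural logarithm; `0 log 0 = 0`). -/
noncomputable def critExp {P : Type*} [Fintype P] [PartialOrder P]
    (α : Finset P → ℝ) (Q : Set P) : ℝ :=
  (∑ T ∈ antichainsIn Q, -(shadowWeight α Q T * Real.log (shadowWeight α Q T))) /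
    (Q.ncard : ℝ)

/-- The critical exponent `c_⋆(P) = max_{α ∈ Δ_{a(P)}} min_{∅ ≠ Q ⊆ P} c_{α,P}(Q)`,
expressed as `sup {c ≥ 0 : ∃ α ∈ Δ_{a(P)}, ∀ ∅ ≠ Q ⊆ P, c ≤ c_{α,P}(Q)}`. -/
noncomputable def critStar (P : Type*) [Fintype P] [PartialOrder P] : ℝ :=
  sSup {c : ℝ | 0 ≤ c ∧ ∃ α : Finset P → ℝ, IsWeighting α ∧
    ∀ Q : Set P, Q.Nonempty → c ≤ critExp α Q}

/-- The binary entropy function `H₂(x) = -x log x - (1-x) log (1-x)` (natural log). -/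
noncomputable def H₂ (x : ℝ) : ℝ := -(x * Real.log x) - (1 - x) * Real.log (1 - x)

/-- The layered poset `C(s 0, …, s (ℓ-1))`: disjoint antichains `V 0, …, V (ℓ-1)` with
`|V i| = s i`, where `x < y` precisely when `x` lies in an earlier layer than `y`. -/
def Layered (ℓ : ℕ) (s : Fin ℓ → ℕ) : Type := (i : Fin ℓ) × Fin (s i)

instance (ℓ : ℕ) (s : Fin ℓ → ℕ) : PartialOrder (Layered ℓ s) where
  le x y := x.1 < y.1 ∨ x = y
  le_refl x := Or.inr rfl
  le_trans x y z hxy hyz := by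
    rcases hxy with h | h
    · rcases hyz with h' | h'
      · exact Or.inl (h.trans h')
      · subst h'; exact Or.inl h
    · subst h; exact hyz
  le_antisymm x y hxy hyx := by
    rcases hxy with h | h
    · rcases hyx with h' | h'
      · exact absurd (h.trans h') (lt_irrefl _)
      · exact h'.symm
    · exact h

instance (ℓ : ℕ) (s : Fin ℓ → ℕ) : Fintype (Layered ℓ s) :=
  inferInstanceAs (Fintype ((i : Fin ℓ) × Fin (s i)))


open Real

namespace Diam

/-- bottom element -/
def bt (t : ℕ) : Layered 3 ![1, t, 1] := ⟨0, (0 : Fin 1)⟩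
/-- top element -/
def tp (t : ℕ) : Layered 3 ![1, t, 1] := ⟨2, (0 : Fin 1)⟩
/-- middle elements -/
def md (t : ℕ) (i : Fin t) : Layered 3 ![1, t, 1] := ⟨1, i⟩

variable {t : ℕ}

theorem le_def' (p q : Layered 3 ![1, t, 1]) : p ≤ q ↔ p.1 < q.1 ∨ p = q := Iff.rfl

theorem cases3 (p : Layered 3 ![1, t, 1]) : p = bt t ∨ p = tp t ∨ ∃ i, p = md t i := by
  rcases p with ⟨i, j⟩
  fin_cases i
  · left
    have : j = (0 : Fin 1) := Subsingleton.elim (α := Fin 1) _ _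
    subst this; rfl
  · right; right; exact ⟨j, rfl⟩
  · right; left
    have : j = (0 : Fin 1) := Subsingleton.elim (α := Fin 1) _ _
    subst this; rfl

theorem md_inj {i j : Fin t} : md t i = md t j ↔ i = j := by
  constructor
  · intro h
    have h2 := (Sigma.mk.inj_iff.1 h).2
    exact eq_of_heq h2
  · rintro rfl; rfl

theorem fst_ne {p q : Layered 3 ![1, t, 1]} (h : p.1 ≠ q.1) : p ≠ q := by
  rintro rfl; exact h rfl

@[simp] theorem bt1 : (bt t).1 = 0 := rfl
@[simp] theorem tp1 : (tp t).1 = 2 := rfl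
@[simp] theorem md1 (i : Fin t) : (md t i).1 = 1 := rfl
@[simp] theorem bt_ne_tp : bt t ≠ tp t := fst_ne (by simp)
@[simp] theorem tp_ne_bt : tp t ≠ bt t := fst_ne (by simp)
@[simp] theorem bt_ne_md (i : Fin t) : bt t ≠ md t i := fst_ne (by simp)
@[simp] theorem md_ne_bt (i : Fin t) : md t i ≠ bt t := fst_ne (by simp)
@[simp] theorem tp_ne_md (i : Fin t) : tp t ≠ md t i := fst_ne (by simp)
@[simp] theorem md_ne_tp (i : Fin t) : md t i ≠ tp t := fst_ne (by simp)
@[simp] theorem md_eq (i j : Fin t) : md t i = md t j ↔ i = j := md_inj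
@[simp] theorem bt_le (p : Layered 3 ![1, t, 1]) : bt t ≤ p := by
  rcases cases3 p with rfl | rfl | ⟨i, rfl⟩ <;> simp [le_def']
@[simp] theorem le_tp (p : Layered 3 ![1, t, 1]) : p ≤ tp t := by
  rcases cases3 p with rfl | rfl | ⟨i, rfl⟩ <;> simp [le_def']
@[simp] theorem md_le_md (i j : Fin t) : md t i ≤ md t j ↔ i = j := by simp [le_def']
@[simp] theorem md_le_bt (i : Fin t) : ¬ md t i ≤ bt t := by simp [le_def']
@[simp] theorem tp_le_bt : ¬ tp t ≤ bt t := by simp [le_def']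
@[simp] theorem tp_le_md (i : Fin t) : ¬ tp t ≤ md t i := by simp [le_def']
@[simp] theorem md_lt_md (i j : Fin t) : ¬ md t i < md t j := by
  rw [lt_iff_le_and_ne]; simp
@[simp] theorem md_lt_tp (i : Fin t) : md t i < tp t := by rw [lt_iff_le_and_ne]; simp
@[simp] theorem bt_lt_tp : bt t < tp t := by rw [lt_iff_le_and_ne]; simp
@[simp] theorem bt_lt_md (i : Fin t) : bt t < md t i := by rw [lt_iff_le_and_ne]; simp
@[simp] theorem not_lt_bt (p : Layered 3 ![1, t, 1]) : ¬ p < bt t := not_lt_of_ge (bt_le p) |> fun h => h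
@[simp] theorem not_tp_lt (p : Layered 3 ![1, t, 1]) : ¬ tp t < p := fun h => absurd (le_tp p) (not_le_of_gt h)

theorem forall3 (F : Layered 3 ![1, t, 1] → Prop) :
    (∀ p, F p) ↔ F (bt t) ∧ F (tp t) ∧ ∀ i, F (md t i) := by
  constructor
  · intro h; exact ⟨h _, h _, fun i => h _⟩
  · rintro ⟨h1, h2, h3⟩ p
    rcases cases3 p with rfl | rfl | ⟨i, rfl⟩
    exacts [h1, h2, h3 i]

/-- middle set -/
def mdE (t : ℕ) : Fin t ↪ Layered 3 ![1, t, 1] := ⟨md t, fun _ _ h => md_inj.1 h⟩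

@[simp] theorem mdE_apply (i : Fin t) : mdE t i = md t i := rfl

open Classical in
/-- label to antichain; `c` says whether empty is replaced by top -/
noncomputable def psi (c : Prop) (N : Finset (Fin t)) : Finset (Layered 3 ![1, t, 1]) :=
  if c ∧ N = ∅ then {tp t} else N.map (mdE t)

@[simp] theorem bt_mem_psi (c : Prop) (N : Finset (Fin t)) : bt t ∉ psi c N := by
  unfold psi; split_ifs <;> simp 
@[simp] theorem tp_mem_psi (c : Prop) (N : Finset (Fin t)) : tp t ∈ psi c N ↔ c ∧ N = ∅ := by
  unfold psi; split_ifs with h <;> simp [h]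
@[simp] theorem md_mem_psi (c : Prop) (N : Finset (Fin t)) (i : Fin t) :
    md t i ∈ psi c N ↔ i ∈ N := by
  unfold psi; split_ifs with h <;> simp [h]

theorem psi_inj (c : Prop) : Function.Injective (psi c : Finset (Fin t) → _) := by
  intro N N' h
  ext i
  rw [← md_mem_psi c N i, h, md_mem_psi]

theorem psi_ne_bt (c : Prop) (N : Finset (Fin t)) : psi c N ≠ {bt t} := by
  intro h
  have := bt_mem_psi c N
  rw [h] at this; simp at this

theorem psi_ne_empty (c : Prop) (hc : c) (N : Finset (Fin t)) : psi c N ≠ ∅ := by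
  intro h
  have h1 : tp t ∉ psi c N := by rw [h]; simp
  have h2 : ∀ i, md t i ∉ psi c N := by rw [h]; simp
  simp only [md_mem_psi] at h2
  rw [tp_mem_psi] at h1
  exact h1 ⟨hc, Finset.eq_empty_of_forall_notMem h2⟩

theorem psi_anti (c : Prop) (N : Finset (Fin t)) :
    IsAntichain (· ≤ ·) (psi c N : Set (Layered 3 ![1, t, 1])) := by
  unfold psi; split_ifs with h
  · simp
  · intro x hx y hy hne hle
    simp  at hx hy
    obtain ⟨i, hi, rfl⟩ := hx
    obtain ⟨j, hj, rfl⟩ := hy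
    exact hne (by simpa using hle)

open Classical in
theorem antichains_eq : antichains (Layered 3 ![1, t, 1]) =
    insert ∅ (insert {bt t} (Finset.univ.image (psi True))) := by
  ext B
  simp only [antichains, Finset.mem_filter, Finset.mem_univ, true_and, Finset.mem_insert,
    Finset.mem_image]
  constructor
  · intro hB
    by_cases h0 : B = ∅
    · exact Or.inl h0
    right
    by_cases hb : bt t ∈ B
    · left
      ext p
      simp only [Finset.mem_singleton]
      refine ⟨fun hp => ?_, fun h => h ▸ hb⟩
      by_contra hne
      exact hB hb hp (Ne.symm hne) (bt_le p)
    right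
    by_cases hu : tp t ∈ B
    · refine ⟨∅, ?_⟩
      simp only [psi, true_and, if_true]
      ext p
      simp only [Finset.mem_singleton]
      refine ⟨fun h => h ▸ hu, fun hp => ?_⟩
      by_contra hne
      exact hB hp hu hne (le_tp p)
    · refine ⟨Finset.univ.filter (fun i => md t i ∈ B), ?_⟩
      have key : ∃ i, md t i ∈ B := by
        obtain ⟨p, hp⟩ := Finset.nonempty_iff_ne_empty.2 h0
        rcases cases3 p with rfl | rfl | ⟨i, rfl⟩
        · exact absurd hp hb
        · exact absurd hp hu
        · exact ⟨i, hp⟩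
      rw [Finset.ext_iff, forall3]
      refine ⟨by simp [hb], ?_, by simp⟩
      rw [tp_mem_psi]
      simp only [hu, iff_false, true_and]
      intro h
      obtain ⟨i, hi⟩ := key
      have : i ∈ Finset.univ.filter (fun i => md t i ∈ B) := by simp [hi]
      rw [h] at this
      simp at this
  · rintro (rfl | rfl | ⟨N, rfl⟩)
    · simp
    · simp
    · exact psi_anti _ _

theorem sum_antichains (F : Finset (Layered 3 ![1, t, 1]) → ℝ) :
    ∑ B ∈ antichains (Layered 3 ![1, t, 1]), F B =
      F ∅ + (F {bt t} + ∑ N : Finset (Fin t), F (psi True N)) := by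
  classical
  rw [antichains_eq, Finset.sum_insert, Finset.sum_insert, Finset.sum_image]
  · intro a _ b _ h; exact psi_inj _ h
  · simp [psi_ne_bt]
  · simp only [Finset.mem_insert, Finset.mem_image, Finset.mem_univ, true_and, not_or, not_exists]
    exact ⟨(Finset.singleton_ne_empty _).symm, fun N => psi_ne_empty _ trivial N⟩

open Classical in
/-- middle trace -/
noncomputable def tr (Q : Set (Layered 3 ![1, t, 1])) : Finset (Fin t) :=
  Finset.univ.filter (fun i => md t i ∈ Q)

@[simp] theorem mem_tr (Q : Set (Layered 3 ![1, t, 1])) (i : Fin t) : i ∈ tr Q ↔ md t i ∈ Q := by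
  simp [tr]

theorem shadow_empty (Q : Set (Layered 3 ![1, t, 1])) :
    upperShadow Q ((∅ : Finset (Layered 3 ![1, t, 1])) : Set _) =
      ((∅ : Finset (Layered 3 ![1, t, 1])) : Set _) := by
  ext y; simp [upperShadow]

theorem shadow_psi (Q : Set (Layered 3 ![1, t, 1])) (N : Finset (Fin t)) :
    upperShadow Q (psi True N : Set _) =
      (psi (tp t ∈ Q) (N ∩ tr Q) : Set (Layered 3 ![1, t, 1])) := by
  have ex : ∀ G : Layered 3 ![1, t, 1] → Prop, (∃ p, G p) ↔ G (bt t) ∨ G (tp t) ∨ ∃ i, G (md t i) := by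
    intro G
    have := forall3 (fun p => ¬ G p)
    rw [← not_iff_not]; push Not; exact this
  rw [Set.ext_iff, forall3]
  refine ⟨?_, ?_, ?_⟩
  · simp [upperShadow, ex]
  · simp only [upperShadow, Set.mem_ofPred_eq, ex, forall3, Finset.mem_coe, tp_mem_psi, md_mem_psi,
      bt_mem_psi]
    simp only [md_le_md, tp_le_md, md_le_bt, tp_le_bt, le_tp, md_lt_tp, bt_lt_tp,
      Finset.eq_empty_iff_forall_notMem, Finset.mem_inter, mem_tr]
    simp
    intro hQ
    constructor
    · rintro ⟨h1, h2⟩ i hi hq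
      exact h2 i hq hi
    · intro h
      refine ⟨?_, ?_⟩
      · by_cases h' : ∀ x, x ∉ N
        · exact Or.inl h'
        · right; push Not at h'; exact h'
      · intro i hq hj
        exact h _ hj hq
  · intro i
    simp only [upperShadow, Set.mem_ofPred_eq, ex, forall3, Finset.mem_coe, tp_mem_psi, md_mem_psi,
      bt_mem_psi]
    simp
    tauto

theorem shadow_bt_mem (Q : Set (Layered 3 ![1, t, 1])) (h : bt t ∈ Q) :
    upperShadow Q (({bt t} : Finset (Layered 3 ![1, t, 1])) : Set _) =
      (({bt t} : Finset (Layered 3 ![1, t, 1])) : Set _) := by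
  rw [Set.ext_iff, forall3]
  simp [upperShadow, h]
  refine ⟨fun _ => ⟨_, h, by simp⟩, fun i _ => ⟨_, h, by simp⟩⟩

theorem shadow_bt_notMem (Q : Set (Layered 3 ![1, t, 1])) (h : bt t ∉ Q) :
    upperShadow Q (({bt t} : Finset (Layered 3 ![1, t, 1])) : Set _) =
      (psi (tp t ∈ Q) (tr Q) : Set (Layered 3 ![1, t, 1])) := by
  rw [Set.ext_iff, forall3]
  simp [upperShadow, h, forall3, Finset.eq_empty_iff_forall_notMem]

open Classical in
theorem sw_eq (α : Finset (Layered 3 ![1, t, 1]) → ℝ) (Q : Set (Layered 3 ![1, t, 1]))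
    (T : Finset (Layered 3 ![1, t, 1])) :
    shadowWeight α Q T =
      (if T = ∅ then α ∅ else 0) +
      ((if T = (if bt t ∈ Q then {bt t} else psi (tp t ∈ Q) (tr Q)) then α {bt t} else 0) +
      ∑ N : Finset (Fin t), if T = psi (tp t ∈ Q) (N ∩ tr Q) then α (psi True N) else 0) := by
  unfold shadowWeight
  rw [Finset.sum_filter, sum_antichains]
  congr 1
  · rw [shadow_empty]; simp only [Finset.coe_inj, eq_comm]
  congr 1
  · by_cases h : bt t ∈ Q
    · rw [shadow_bt_mem Q h, if_pos h]; simp only [Finset.coe_inj, eq_comm]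
    · rw [shadow_bt_notMem Q h, if_neg h]; simp only [Finset.coe_inj, eq_comm]
  · refine Finset.sum_congr rfl fun N _ => ?_
    rw [shadow_psi]; simp only [Finset.coe_inj, eq_comm]

theorem card_inter (A N : Finset (Fin t)) (hN : N ⊆ A) :
    ((Finset.univ.filter (fun M : Finset (Fin t) => N = M ∩ A)).card : ℝ) * 2 ^ A.card = 2 ^ t := by
  have : (Finset.univ.filter (fun M : Finset (Fin t) => N = M ∩ A)).card = (Aᶜ).powerset.card := by
    refine Finset.card_bij' (fun M _ => M \ A) (fun M _ => M ∪ N) ?_ ?_ ?_ ?_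
    · intro M hM; simp [Finset.subset_iff]
    · intro M hM
      simp only [Finset.mem_powerset, Finset.mem_filter, Finset.mem_univ, true_and,
        Finset.subset_iff, Finset.mem_compl] at hM ⊢
      ext i; have := @hM i; have := @hN i; simp; tauto
    · intro M hM
      simp only [Finset.mem_filter, Finset.mem_univ, true_and] at hM
      subst hM
      ext i; simp; tauto
    · intro M hM
      simp only [Finset.mem_powerset, Finset.subset_iff, Finset.mem_compl] at hM
      ext i; have := @hM i; have := @hN i; simp; tauto
  rw [this, Finset.card_powerset, Finset.card_compl, Fintype.card_fin]
  push_cast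
  rw [← pow_add]
  congr 1
  have := Finset.card_le_univ A
  simp at this
  omega

theorem ncard_eq (Q : Set (Layered 3 ![1, t, 1])) [Decidable (bt t ∈ Q)] [Decidable (tp t ∈ Q)] :
    Q.ncard = (tr Q).card + (if bt t ∈ Q then 1 else 0) + (if tp t ∈ Q then 1 else 0) := by
  classical
  have : Q = (((tr Q).map (mdE t) ∪ (if bt t ∈ Q then {bt t} else ∅)) ∪
      (if tp t ∈ Q then {tp t} else ∅) : Finset (Layered 3 ![1, t, 1])) := by
    rw [Set.ext_iff, forall3]
    refine ⟨?_, ?_, ?_⟩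
    · split_ifs <;> simp_all 
    · split_ifs <;> simp_all 
    · intro i; split_ifs <;> simp_all 
  conv_lhs => rw [this]
  rw [Set.ncard_coe_finset, Finset.card_union_of_disjoint, Finset.card_union_of_disjoint,
    Finset.card_map]
  · split_ifs <;> simp
  · split_ifs <;> simp 
  · split_ifs <;> simp 

/-- Gibbs type inequality -/
theorem gibbs {y y0 : ℝ} (hy : 0 ≤ y) (h0 : 0 < y0) : negMulLog y ≤ -y * log y0 - y + y0 := by
  rcases hy.eq_or_lt with rfl | hy
  · simp [h0.le]
  have := Real.log_le_sub_one_of_pos (div_pos h0 hy)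
  rw [Real.log_div h0.ne' hy.ne'] at this
  unfold negMulLog
  have h2 := mul_le_mul_of_nonneg_left this hy.le
  have h3 : y * (y0 / y - 1) = y0 - y := by field_simp
  nlinarith

/-- entropy loss bound -/
theorem loss {x w c : ℝ} (hx : 0 < x) (hx2 : x ≤ 1/4) 
    (hG : 2 * negMulLog x + negMulLog (1 - 2*x) = 2 * c) (hw : 0 ≤ w) (hw2 : w ≤ 1 - 2*x) :
    negMulLog w + (negMulLog x - c) ≤ negMulLog (w + x) := by
  have conc : ∀ (x y a b : ℝ), 0 ≤ x → 0 ≤ y → 0 ≤ a → 0 ≤ b → a + b = 1 →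
      a * negMulLog x + b * negMulLog y ≤ negMulLog (a * x + b * y) :=
    fun x y a b hx hy ha hb hab => Real.concaveOn_negMulLog.2 hx hy ha hb hab
  have A : negMulLog (1 - 2*x) + negMulLog 1 ≤ 2 * negMulLog (1 - x) := by
    have := conc (1 - 2*x) 1 (1/2) (1/2) (by linarith) (by norm_num)
      (by norm_num) (by norm_num) (by norm_num)
    have e : 1/2 * (1 - 2*x) + 1/2 * 1 = 1 - x := by ring
    rw [e] at this; linarith
  simp at A
  have B : negMulLog w + negMulLog (1 - x) ≤ negMulLog (w + x) + negMulLog (1 - 2*x) := by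
    set d := 1 - x - w with hd
    have hdp : 0 < d := by linarith
    have h1 := conc w (1 - x) ((1 - 2*x - w)/d) (x/d) hw (by linarith)
      (div_nonneg (by linarith) hdp.le) (by positivity)
      (by field_simp; linarith)
    have h2 := conc w (1 - x) (x/d) ((1 - 2*x - w)/d) hw (by linarith)
      (by positivity) (div_nonneg (by linarith) hdp.le) 
      (by field_simp; linarith)
    have e1 : (1 - 2*x - w)/d * w + x/d * (1 - x) = w + x := by
      field_simp; rw [hd]; ring
    have e2 : x/d * w + (1 - 2*x - w)/d * (1 - x) = 1 - 2*x := by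
      field_simp; rw [hd]; ring
    rw [e1] at h1; rw [e2] at h2
    have e3 : (1 - 2*x - w)/d + x/d = 1 := by field_simp; linarith
    have e4 : (1 - 2*x - w)/d = 1 - x/d := by linarith
    rw [e4] at h1 h2
    nlinarith
  linarith

theorem critExp_eq (α : Finset (Layered 3 ![1, t, 1]) → ℝ) (Q : Set (Layered 3 ![1, t, 1])) :
    critExp α Q = (∑ T ∈ antichainsIn Q, negMulLog (shadowWeight α Q T)) / (Q.ncard : ℝ) := by
  unfold critExp negMulLog
  simp only [neg_mul]

theorem sw_nonneg {α : Finset (Layered 3 ![1, t, 1]) → ℝ} (h : IsWeighting α)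
    (Q : Set (Layered 3 ![1, t, 1])) (T : Finset (Layered 3 ![1, t, 1])) :
    0 ≤ shadowWeight α Q T := by
  classical
  exact Finset.sum_nonneg fun A hA => h.1 A (Finset.mem_filter.1 hA).1

theorem sw_le_one {α : Finset (Layered 3 ![1, t, 1]) → ℝ} (h : IsWeighting α)
    (Q : Set (Layered 3 ![1, t, 1])) (T : Finset (Layered 3 ![1, t, 1])) :
    shadowWeight α Q T ≤ 1 := by
  classical
  rw [← h.2.2]
  exact Finset.sum_le_sum_of_subset_of_nonneg (Finset.filter_subset _ _)
    fun A hA _ => h.1 A hA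

open Classical in
/-- the optimal weighting -/
noncomputable def wt (t : ℕ) (x : ℝ) (B : Finset (Layered 3 ![1, t, 1])) : ℝ :=
  if B = ∅ then x else if B = {bt t} then x else
    if B ∈ antichains (Layered 3 ![1, t, 1]) then (1 - 2*x) / 2^t else 0

theorem wt_empty (x : ℝ) : wt t x ∅ = x := by simp [wt]
theorem wt_bt (x : ℝ) : wt t x {bt t} = x := by simp [wt]
theorem wt_psi (x : ℝ) (N : Finset (Fin t)) : wt t x (psi True N) = (1 - 2*x) / 2^t := by
  classical
  unfold wt
  rw [if_neg (psi_ne_empty _ trivial N), if_neg (psi_ne_bt _ N), if_pos]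
  rw [antichains_eq]; simp

theorem wt_weighting {x : ℝ} (hx : 0 ≤ x) (hx2 : x ≤ 1/4) : IsWeighting (wt t x) := by
  classical
  refine ⟨?_, ?_, ?_⟩
  · intro A _
    unfold wt
    have : 0 ≤ (1 - 2*x) / 2^t := div_nonneg (by linarith) (by positivity)
    split_ifs <;> first | assumption | exact le_rfl
  · intro A hA
    have hA' := hA
    rw [antichains_eq] at hA
    simp only [Finset.mem_insert, not_or] at hA
    unfold wt
    rw [if_neg hA.1, if_neg hA.2.1, if_neg hA']
  · rw [sum_antichains, wt_empty, wt_bt]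
    simp only [wt_psi]
    simp
    field_simp
    ring

open Classical in
theorem wt_sw_psi (x : ℝ) (Q : Set (Layered 3 ![1, t, 1])) (N : Finset (Fin t)) (hN : N ⊆ tr Q) :
    shadowWeight (wt t x) Q (psi (tp t ∈ Q) N) = (1 - 2*x) / 2^(tr Q).card +
      ((if bt t ∉ Q ∧ N = tr Q then x else 0) + (if tp t ∉ Q ∧ N = ∅ then x else 0)) := by
  rw [sw_eq, wt_empty, wt_bt]
  simp only [wt_psi, (psi_inj (t := t) _).eq_iff]
  rw [← Finset.sum_filter, Finset.sum_const, nsmul_eq_mul]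
  have h := card_inter (tr Q) N hN
  have e1 : (psi (tp t ∈ Q) N = ∅) ↔ (tp t ∉ Q ∧ N = ∅) := by
    by_cases hu : tp t ∈ Q
    · simp [hu, psi_ne_empty]
    · simp [hu, psi]
  have e2 : (psi (tp t ∈ Q) N = if bt t ∈ Q then {bt t} else psi (tp t ∈ Q) (tr Q)) ↔
      (bt t ∉ Q ∧ N = tr Q) := by
    by_cases hu : bt t ∈ Q
    · simp [hu, psi_ne_bt]
    · simp [hu, (psi_inj (t := t) _).eq_iff]
  simp only [e1, e2]
  have e3 : ((Finset.univ.filter (fun M : Finset (Fin t) => N = M ∩ tr Q)).card : ℝ) *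
      ((1 - 2*x)/2^t) = (1 - 2*x) / 2^(tr Q).card := by
    rw [← h]
    have : ((Finset.univ.filter (fun M : Finset (Fin t) => N = M ∩ tr Q)).card : ℝ) ≠ 0 := by
      intro h0; rw [h0] at h; simp at h
      exact absurd h.symm (by positivity)
    field_simp
  rw [e3]
  ring

theorem wt_sw_empty (x : ℝ) (Q : Set (Layered 3 ![1, t, 1])) (hu : tp t ∈ Q) :
    shadowWeight (wt t x) Q ∅ = x := by
  classical
  rw [sw_eq, wt_empty, wt_bt]
  have e : ∀ N : Finset (Fin t), ¬ (∅ = psi (tp t ∈ Q) N) :=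
    fun N h => psi_ne_empty _ hu N h.symm
  simp only [e, if_false]
  by_cases hb : bt t ∈ Q <;> simp [hb, e]

theorem wt_sw_bt (x : ℝ) (Q : Set (Layered 3 ![1, t, 1])) (hb : bt t ∈ Q) :
    shadowWeight (wt t x) Q {bt t} = x := by
  classical
  rw [sw_eq, wt_empty, wt_bt]
  have e : ∀ N : Finset (Fin t), ¬ ({bt t} = psi (tp t ∈ Q) N) :=
    fun N h => psi_ne_bt _ N h.symm
  simp only [e, if_false]
  simp [hb]

theorem lower {x c : ℝ} (hx : 0 < x) (hx2 : x ≤ 1/4) (hc : c = (1 - 2*x) * log 2)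
    (hG : 2 * negMulLog x + negMulLog (1 - 2*x) = 2 * c)
    (Q : Set (Layered 3 ![1, t, 1])) (hQ : Q.Nonempty) : c ≤ critExp (wt t x) Q := by
  classical
  rw [critExp_eq, le_div_iff₀ (by exact_mod_cast (Set.ncard_pos (Set.toFinite Q)).2 hQ)]
  have hW := wt_weighting (t := t) hx.le hx2
  set I1 : Finset (Finset (Layered 3 ![1, t, 1])) := (tr Q).powerset.image (psi (tp t ∈ Q)) with hI1
  set I2 : Finset (Finset (Layered 3 ![1, t, 1])) := if bt t ∈ Q then {{bt t}} else ∅ with hI2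
  set I3 : Finset (Finset (Layered 3 ![1, t, 1])) := if tp t ∈ Q then {∅} else ∅ with hI3
  have hsub : (I1 ∪ I2) ∪ I3 ⊆ antichainsIn Q := by
    intro T hT
    simp only [antichainsIn, antichains, Finset.mem_filter, Finset.mem_univ, true_and]
    rw [Finset.mem_union, Finset.mem_union] at hT
    rcases hT with (hT | hT) | hT
    · obtain ⟨N, hN, rfl⟩ := Finset.mem_image.1 hT
      refine ⟨psi_anti _ _, ?_⟩
      rw [Set.subset_def, forall3]
      rw [Finset.mem_powerset] at hN
      refine ⟨by simp, by simp; tauto, ?_⟩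
      intro i hi
      simp at hi
      simpa using hN hi
    · rw [hI2] at hT
      split_ifs at hT with hb
      · simp at hT; subst hT; simp [hb]
      · simp at hT
    · rw [hI3] at hT
      split_ifs at hT with hb
      · simp at hT; subst hT; simp
      · simp at hT
  have hd1 : Disjoint (I1 ∪ I2) I3 := by
    rw [hI3]; split_ifs with hu
    · simp only [Finset.disjoint_singleton_right, Finset.mem_union, not_or]
      constructor
      · rw [hI1]; simp only [Finset.mem_image, not_exists, not_and]
        exact fun N _ => psi_ne_empty _ hu N
      · rw [hI2]; split_ifs <;> simp [eq_comm]
    · simp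
  have hd2 : Disjoint I1 I2 := by
    rw [hI2]; split_ifs with hu
    · simp only [Finset.disjoint_singleton_right]
      rw [hI1]; simp only [Finset.mem_image, not_exists, not_and]
      exact fun N _ => psi_ne_bt _ N
    · simp
  have hle := Finset.sum_le_sum_of_subset_of_nonneg
    (f := fun T => negMulLog (shadowWeight (wt t x) Q T)) hsub
    (fun T _ _ => negMulLog_nonneg (sw_nonneg hW Q T) (sw_le_one hW Q T))
  refine le_trans ?_ hle
  rw [Finset.sum_union hd1, Finset.sum_union hd2]
  have s2 : ∑ T ∈ I2, negMulLog (shadowWeight (wt t x) Q T) =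
      (if bt t ∈ Q then negMulLog x else 0) := by
    rw [hI2]; split_ifs with hb
    · simp [wt_sw_bt x Q hb]
    · simp
  have s3 : ∑ T ∈ I3, negMulLog (shadowWeight (wt t x) Q T) =
      (if tp t ∈ Q then negMulLog x else 0) := by
    rw [hI3]; split_ifs with hb
    · simp [wt_sw_empty x Q hb]
    · simp
  set k := (tr Q).card with hk
  set w := (1 - 2*x) / 2^k with hw
  have hpow : (1:ℝ) ≤ 2^k := one_le_pow₀ (by norm_num)
  have hr : 0 < 1 - 2*x := by linarith
  have hwp : 0 < w := by positivity
  have hw1 : w ≤ 1 - 2*x := div_le_self hr.le hpow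
  have s1 : 2^k * negMulLog w + ((if bt t ∉ Q then negMulLog x - c else 0) +
      (if tp t ∉ Q then negMulLog x - c else 0)) ≤
      ∑ T ∈ I1, negMulLog (shadowWeight (wt t x) Q T) := by
    rw [hI1, Finset.sum_image (fun a _ b _ h => psi_inj _ h)]
    have : ∀ N ∈ (tr Q).powerset, negMulLog w + ((if bt t ∉ Q ∧ N = tr Q then negMulLog x - c else 0) +
        (if tp t ∉ Q ∧ N = ∅ then negMulLog x - c else 0)) ≤
        negMulLog (shadowWeight (wt t x) Q (psi (tp t ∈ Q) N)) := by
      intro N hN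
      rw [wt_sw_psi x Q N (Finset.mem_powerset.1 hN), ← hk, ← hw]
      have hl := loss hx hx2 hG hwp.le hw1
      by_cases h1 : bt t ∉ Q ∧ N = tr Q <;> by_cases h2 : tp t ∉ Q ∧ N = ∅
      · exfalso
        obtain ⟨p, hp⟩ := hQ
        rcases cases3 p with rfl | rfl | ⟨i, rfl⟩
        · exact h1.1 hp
        · exact h2.1 hp
        · rw [← mem_tr, ← h1.2, h2.2] at hp; simp at hp
      · rw [if_pos h1, if_neg h2, if_pos h1, if_neg h2]; simpa using hl
      · rw [if_neg h1, if_pos h2, if_neg h1, if_pos h2]; simpa using hl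
      · rw [if_neg h1, if_neg h2, if_neg h1, if_neg h2]; simp
    refine le_trans (le_of_eq ?_) (Finset.sum_le_sum this)
    rw [Finset.sum_add_distrib, Finset.sum_add_distrib, Finset.sum_const, Finset.card_powerset,
      nsmul_eq_mul]
    push_cast
    congr 1
    congr 1
    · by_cases h : bt t ∈ Q <;> simp [h]
    · by_cases h : tp t ∈ Q <;> simp [h]
  rw [s2, s3]
  have hmain : 2^k * negMulLog w = negMulLog (1 - 2*x) + k * c := by
    rw [hw, hc]
    unfold negMulLog
    rw [Real.log_div hr.ne' (by positivity), Real.log_pow]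
    field_simp
    ring
  rw [ncard_eq]
  rw [hmain] at s1
  push_cast
  by_cases hb : bt t ∈ Q <;> by_cases hu : tp t ∈ Q <;> simp [hb, hu] at s1 ⊢ <;> linarith

theorem upper (ht : 2 ≤ t) {x c c' : ℝ} (hx : 1/6 ≤ x) (hx2 : x ≤ 1/4)
    (hc : c = (1 - 2*x) * log 2)
    (hG : 2 * negMulLog x + negMulLog (1 - 2*x) = 2 * c)
    (α : Finset (Layered 3 ![1, t, 1]) → ℝ) (hα : IsWeighting α)
    (h : ∀ Q : Set (Layered 3 ![1, t, 1]), Q.Nonempty → c' ≤ critExp α Q) : c' ≤ c := by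
  classical
  have hx0 : 0 < x := by linarith
  have hr : 0 < 1 - 2*x := by linarith
  set p := α ∅ with hp
  set q := α {bt t} with hq
  have hsum := hα.2.2
  rw [sum_antichains, ← hp, ← hq] at hsum
  have hmem : ∀ B, B = ∅ ∨ B = {bt t} ∨ (∃ N, B = psi True N) → 0 ≤ α B := by
    intro B hB
    apply hα.1
    rw [antichains_eq]; simp
    rcases hB with h | h | ⟨N, h⟩
    · exact Or.inl h
    · exact Or.inr (Or.inl h)
    · exact Or.inr (Or.inr ⟨N, h.symm⟩)
  have hp0 : 0 ≤ p := hmem _ (Or.inl rfl)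
  have hq0 : 0 ≤ q := hmem _ (Or.inr (Or.inl rfl))
  have hN0 : ∀ N, 0 ≤ α (psi True N) := fun N => hmem _ (Or.inr (Or.inr ⟨N, rfl⟩))
  have hr0 : 0 ≤ 1 - p - q := by
    have : 0 ≤ ∑ N : Finset (Fin t), α (psi True N) := Finset.sum_nonneg fun N _ => hN0 N
    linarith
  -- Q = {b, u}
  have h1 : 2 * c' ≤ negMulLog p + negMulLog q + negMulLog (1 - p - q) := by
    have h1 := h {bt t, tp t} ⟨bt t, by simp⟩
    rw [critExp_eq, le_div_iff₀ (by rw [Set.ncard_pair bt_ne_tp]; norm_num),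
      Set.ncard_pair bt_ne_tp] at h1
    have htr : tr ({bt t, tp t} : Set (Layered 3 ![1, t, 1])) = ∅ := by
      ext i; simp
    have ea : antichainsIn ({bt t, tp t} : Set (Layered 3 ![1, t, 1])) = {∅, {bt t}, {tp t}} := by
      ext B
      simp only [antichainsIn, antichains_eq, Finset.mem_filter, Finset.mem_insert,
        Finset.mem_image, Finset.mem_univ, true_and, Finset.mem_singleton]
      constructor
      · rintro ⟨rfl | rfl | ⟨N, rfl⟩, hB⟩
        · simp
        · simp
        · right; right
          have : N = ∅ := by
            apply Finset.eq_empty_of_forall_notMem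
            intro i hi
            have := hB (show md t i ∈ (psi True N : Set (Layered 3 ![1, t, 1])) by simpa using hi)
            simp at this
          subst this; simp [psi]
      · rintro (rfl | rfl | rfl)
        · simp
        · simp
        · refine ⟨Or.inr (Or.inr ⟨∅, by simp [psi]⟩), by simp⟩
    have hpsi : psi True (∅ : Finset (Fin t)) = {tp t} := by simp [psi]
    rw [ea, Finset.sum_insert (by simp [eq_comm]), Finset.sum_insert (by simp), Finset.sum_singleton] at h1
    simp only [sw_eq, htr] at h1
    simp [hpsi] at h1
    rw [show ∑ N : Finset (Fin t), α (psi True N) = 1 - p - q by linarith] at h1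
    linarith
  -- Q = P
  have h2 : (t + 2) * c' ≤ negMulLog p + negMulLog q +
      ∑ N : Finset (Fin t), negMulLog (α (psi True N)) := by
    have h1 := h Set.univ ⟨bt t, by simp⟩
    have hn : ((Set.univ : Set (Layered 3 ![1, t, 1])).ncard : ℝ) = t + 2 := by
      rw [ncard_eq]; simp [tr]; ring
    rw [critExp_eq, hn, le_div_iff₀ (by positivity)] at h1
    have ea : antichainsIn (Set.univ : Set (Layered 3 ![1, t, 1])) = antichains _ := by
      simp [antichainsIn]
    have htr : tr (Set.univ : Set (Layered 3 ![1, t, 1])) = Finset.univ := by ext i; simp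
    rw [ea, sum_antichains] at h1
    have a1 : ∀ N : Finset (Fin t), psi True N ≠ ∅ := fun N => psi_ne_empty _ trivial N
    have a2 : ∀ N : Finset (Fin t), ∅ ≠ psi True N := fun N => (a1 N).symm
    have a3 : ∀ N : Finset (Fin t), {bt t} ≠ psi True N := fun N => (psi_ne_bt _ N).symm
    simp only [sw_eq, htr] at h1
    simp [a1, a2, a3, psi_ne_bt, (psi_inj (t := t) _).eq_iff, eq_comm] at h1
    linarith
  have gp := gibbs hp0 hx0
  have gq := gibbs hq0 hx0
  have gr := gibbs hr0 hr
  have gs : ∑ N : Finset (Fin t), negMulLog (α (psi True N)) ≤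
      -(1 - p - q) * (log (1 - 2*x) - t * log 2) - (1 - p - q) + (1 - 2*x) := by
    have hw : 0 < (1 - 2*x) / 2^t := by positivity
    refine le_trans (Finset.sum_le_sum fun N _ => gibbs (hN0 N) hw) (le_of_eq ?_)
    rw [Finset.sum_add_distrib, Finset.sum_sub_distrib, ← Finset.sum_mul,
      Finset.sum_neg_distrib, show ∑ N : Finset (Fin t), α (psi True N) = 1 - p - q by linarith,
      Real.log_div hr.ne' (by positivity), Real.log_pow]
    simp
    field_simp
  have hl2 : 0 < log 2 := Real.log_pos (by norm_num)
  -- slope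
  have d1 : log x ≤ log (1 - 2*x) := Real.log_le_log hx0 (by linarith)
  have d2 : log (1 - 2*x) ≤ log x + 2 * log 2 := by
    have : log x + 2 * log 2 = log (x * 4) := by
      rw [Real.log_mul hx0.ne' (by norm_num), show (4:ℝ) = 2^2 by norm_num, Real.log_pow]; norm_num
    rw [this]
    exact Real.log_le_log hr (by linarith)
  have ht' : (2:ℝ) ≤ t := by exact_mod_cast ht
  unfold negMulLog at hG
  set Lx := log x
  set Lr := log (1 - 2*x)
  unfold negMulLog at gp gq gr gs h1 h2
  rcases le_total (p + q) (2*x) with hs | hs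
  · have := mul_nonneg (sub_nonneg.2 d1) (sub_nonneg.2 hs)
    nlinarith
  · have e1 : 0 ≤ (p + q - 2*x) * (t * log 2 - (Lr - Lx)) := by
      apply mul_nonneg (by linarith)
      nlinarith
    have : (t + 2) * c' ≤ (t + 2) * c := by
      rw [hc] at hG ⊢
      nlinarith
    exact le_of_mul_le_mul_left this (by positivity)

theorem H2_eq (x : ℝ) : H₂ x = Real.binEntropy x := by
  rw [Real.binEntropy_eq_negMulLog_add_negMulLog_one_sub]; unfold H₂ negMulLog; ring

theorem root_anti : StrictAntiOn (fun x : ℝ => 2 * (1 - 3 * x) * Real.log 2 - H₂ (2 * x))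
    (Set.Icc (1/6) (1/4)) := by
  intro a ha b hb hab
  have hl2 : 0 < log 2 := Real.log_pos (by norm_num)
  have := Real.binEntropy_strictMonoOn (a := 2*a) (b := 2*b)
    ⟨by linarith [ha.1], by linarith [ha.2]⟩ ⟨by linarith [hb.1], by linarith [hb.2]⟩ (by linarith)
  simp only [H2_eq]
  nlinarith

theorem root_exists : ∃ x ∈ Set.Icc (1/6 : ℝ) (1/4),
    2 * (1 - 3 * x) * Real.log 2 - H₂ (2 * x) = 0 := by
  have hl2 : 0 < log 2 := Real.log_pos (by norm_num)
  have hcont : ContinuousOn (fun x : ℝ => 2 * (1 - 3 * x) * Real.log 2 - H₂ (2 * x))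
      (Set.Icc (1/6) (1/4)) := by
    simp only [H2_eq]
    apply Continuous.continuousOn
    have := Real.binEntropy_continuous
    fun_prop
  have := intermediate_value_Icc' (by norm_num : (1/6:ℝ) ≤ 1/4) hcont
  apply this
  constructor
  · simp only [H2_eq]
    rw [show 2 * (1/4:ℝ) = 2⁻¹ by norm_num, Real.binEntropy_two_inv]
    linarith
  · unfold H₂
    have e1 : log (2 * (1/6)) = - log 3 := by
      rw [← Real.log_inv]; norm_num
    have e2 : log (1 - 2 * (1/6)) = log 2 - log 3 := by
      rw [← Real.log_div (by norm_num) (by norm_num)]; norm_num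
    rw [e1, e2]
    have : 3 * log 3 ≤ 5 * log 2 := by
      have h := Real.log_le_log (x := 3^3) (y := 2^5) (by norm_num) (by norm_num)
      rw [Real.log_pow, Real.log_pow] at h
      exact_mod_cast h
    linarith

end Diam

/-- There is a unique `x⋆ ∈ [1/6, 1/4]` with `2(1 - 3x⋆) log 2 - H₂(2x⋆) = 0`, and for
every `t ≥ 2` the `t`-wide diamond `C(1,t,1)` satisfies
`c_⋆(C(1,t,1)) = (1 - 2x⋆) log 2`. -/
theorem stmt15 :
    ∃ xs : ℝ, xs ∈ Set.Icc (1 / 6 : ℝ) (1 / 4) ∧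
      2 * (1 - 3 * xs) * Real.log 2 - H₂ (2 * xs) = 0 ∧
      (∀ y ∈ Set.Icc (1 / 6 : ℝ) (1 / 4),
        2 * (1 - 3 * y) * Real.log 2 - H₂ (2 * y) = 0 → y = xs) ∧
      ∀ t : ℕ, 2 ≤ t → critStar (Layered 3 ![1, t, 1]) = (1 - 2 * xs) * Real.log 2 := by
  obtain ⟨x, hx, h0⟩ := Diam.root_exists
  refine ⟨x, hx, h0, ?_, ?_⟩
  · intro y hy hy0
    exact Diam.root_anti.injOn hy hx (hy0.trans h0.symm)
  · intro t ht
    have hx0 : 0 < x := by linarith [hx.1]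
    have hl2 : 0 < Real.log 2 := Real.log_pos (by norm_num)
    have hG : 2 * Real.negMulLog x + Real.negMulLog (1 - 2*x) =
        2 * ((1 - 2 * x) * Real.log 2) := by
      unfold H₂ at h0
      rw [Real.log_mul (by norm_num) hx0.ne'] at h0
      unfold Real.negMulLog
      linarith
    apply IsGreatest.csSup_eq
    constructor
    · exact ⟨mul_nonneg (by linarith [hx.2]) hl2.le, Diam.wt t x,
        Diam.wt_weighting hx0.le hx.2, fun Q hQ => Diam.lower hx0 hx.2 rfl hG Q hQ⟩
    · rintro c' ⟨_, α, hα, h⟩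
      exact Diam.upper ht hx.1 hx.2 rfl hG α hα h
end

section
/- For all integers ℓ ≥ 1 and t ≥ 1, the poset C_ℓ(t) (the t-fold blow-up of the chain of length ℓ) satisfies (log 2)/ℓ ≤ c_⋆(C_ℓ(t)) ≤ (log 2)/ℓ + log( ℓ − (ℓ−1)·2^{−t} ) / (ℓ·t). -/
section Helpers
open Classical

/-- The `i`-th layer. -/
noncomputable def lay (ℓ t : ℕ) (i : Fin ℓ) : Finset (Layered ℓ (fun _ => t)) :=
  Finset.univ.filter (fun x => x.1 = i)

theorem mem_lay {ℓ t : ℕ} {i : Fin ℓ} {x : Layered ℓ (fun _ => t)} :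
    x ∈ lay ℓ t i ↔ x.1 = i := by simp [lay]

theorem layered_le {ℓ t : ℕ} {x y : Layered ℓ (fun _ => t)} :
    x ≤ y ↔ x.1 < y.1 ∨ x = y := Iff.rfl

theorem layered_lt {ℓ t : ℕ} {x y : Layered ℓ (fun _ => t)} :
    x < y ↔ x.1 < y.1 := by
  rw [lt_iff_le_and_ne, layered_le]
  constructor
  · rintro ⟨h | h, h'⟩
    · exact h
    · exact absurd h h'
  · intro h
    refine ⟨Or.inl h, ?_⟩
    rintro rfl
    exact lt_irrefl _ h

/-- The element with index `j` in layer `i`. -/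
def lmk (ℓ t : ℕ) (i : Fin ℓ) (j : Fin t) : Layered ℓ (fun _ => t) := ⟨i, j⟩

theorem lmk_inj (ℓ t : ℕ) (i : Fin ℓ) : Function.Injective (lmk ℓ t i) := by
  intro a b hab
  exact eq_of_heq (Sigma.mk.inj hab).2

theorem eq_lmk {ℓ t : ℕ} (x : Layered ℓ (fun _ => t)) : ∃ j, lmk ℓ t x.1 j = x := ⟨x.2, rfl⟩

theorem card_lay (ℓ t : ℕ) (i : Fin ℓ) : (lay ℓ t i).card = t := by
  have h : lay ℓ t i = (Finset.univ : Finset (Fin t)).image (lmk ℓ t i) := by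
    ext x
    rw [mem_lay]
    simp only [Finset.mem_image, Finset.mem_univ, true_and]
    constructor
    · rintro rfl
      exact eq_lmk x
    · rintro ⟨j, rfl⟩
      rfl
  rw [h, Finset.card_image_of_injective _ (lmk_inj ℓ t i)]
  simp

theorem card_layered (ℓ t : ℕ) : Fintype.card (Layered ℓ (fun _ => t)) = ℓ * t := by
  have : Fintype.card (Layered ℓ (fun _ => t)) = Fintype.card ((_ : Fin ℓ) × Fin t) := rfl
  rw [this]; simp

theorem mem_antichains {P : Type*} [Fintype P] [PartialOrder P] {A : Finset P} :
    A ∈ antichains P ↔ IsAntichain (· ≤ ·) (A : Set P) := by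
  simp [antichains]

theorem sub_lay_antichain {ℓ t : ℕ} {i : Fin ℓ} {A : Finset (Layered ℓ (fun _ => t))}
    (h : A ⊆ lay ℓ t i) : A ∈ antichains (Layered ℓ (fun _ => t)) := by
  rw [mem_antichains]
  intro x hx y hy hne hle
  have h1 := mem_lay.1 (h hx)
  have h2 := mem_lay.1 (h hy)
  rcases layered_le.1 hle with h3 | h3
  · rw [h1, h2] at h3; exact lt_irrefl _ h3
  · exact hne h3

theorem antichain_sub_lay {ℓ t : ℕ} {A : Finset (Layered ℓ (fun _ => t))}
    (h : A ∈ antichains (Layered ℓ (fun _ => t))) (x : Layered ℓ (fun _ => t)) (hx : x ∈ A) :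
    A ⊆ lay ℓ t x.1 := by
  rw [mem_antichains] at h
  intro y hy
  rw [mem_lay]
  by_contra hne
  rcases lt_or_gt_of_ne hne with h1 | h1
  · exact h hy hx (by rintro rfl; exact hne rfl) (Or.inl h1)
  · exact h hx hy (by rintro rfl; exact hne rfl) (Or.inl h1)

theorem card_antichains_le (ℓ t : ℕ) :
    (antichains (Layered ℓ (fun _ => t))).card ≤ ℓ * (2 ^ t - 1) + 1 := by
  have hsub : antichains (Layered ℓ (fun _ => t)) ⊆
      insert ∅ (Finset.univ.biUnion (fun i : Fin ℓ => (lay ℓ t i).powerset.erase ∅)) := by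
    intro A hA
    rcases Finset.eq_empty_or_nonempty A with h | ⟨x, hx⟩
    · simp [h]
    · apply Finset.mem_insert_of_mem
      rw [Finset.mem_biUnion]
      refine ⟨x.1, Finset.mem_univ _, ?_⟩
      rw [Finset.mem_erase, Finset.mem_powerset]
      exact ⟨Finset.ne_empty_of_mem hx, antichain_sub_lay hA x hx⟩
  refine (Finset.card_le_card hsub).trans ((Finset.card_insert_le _ _).trans ?_)
  refine Nat.add_le_add_right (Finset.card_biUnion_le.trans ?_) 1
  rw [Finset.sum_congr rfl (g := fun _ => 2 ^ t - 1)]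
  · simp
  · intro i _
    rw [Finset.card_erase_of_mem (Finset.empty_mem_powerset _), Finset.card_powerset, card_lay]

theorem upperShadow_univ {P : Type*} [Fintype P] [PartialOrder P] {A : Finset P}
    (hA : A ∈ antichains P) : upperShadow Set.univ (A : Set P) = (A : Set P) := by
  rw [mem_antichains] at hA
  ext y
  constructor
  · rintro ⟨_, ⟨x, hx, hxy⟩, h⟩
    rcases hxy.eq_or_lt with h1 | h1
    · rwa [← h1]
    · exact absurd le_rfl (h x trivial h1 x hx)
  · intro hy
    refine ⟨trivial, ⟨y, hy, le_rfl⟩, ?_⟩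
    intro z _ hzy x hx hxz
    exact hA hx hy (hxz.trans_lt hzy).ne (hxz.trans hzy.le)

theorem shadowWeight_univ {P : Type*} [Fintype P] [PartialOrder P] (α : Finset P → ℝ)
    {T : Finset P} (hT : T ∈ antichains P) : shadowWeight α Set.univ T = α T := by
  unfold shadowWeight
  rw [Finset.sum_eq_single T]
  · intro A hA hne
    obtain ⟨hA1, hA2⟩ := Finset.mem_filter.1 hA
    rw [upperShadow_univ hA1] at hA2
    exact absurd (Finset.coe_injective hA2) hne
  · intro h
    exact absurd (Finset.mem_filter.2 ⟨hT, upperShadow_univ hT⟩) h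

theorem entropy_le {ι : Type*} (s : Finset ι) (p : ι → ℝ) (hp : ∀ i ∈ s, 0 ≤ p i)
    (hs : ∑ i ∈ s, p i = 1) : ∑ i ∈ s, -(p i * Real.log (p i)) ≤ Real.log s.card := by
  have hne : s.Nonempty := by
    by_contra h
    rw [Finset.not_nonempty_iff_eq_empty] at h
    simp [h] at hs
  have hN : (0 : ℝ) < s.card := by exact_mod_cast hne.card_pos
  have key : ∀ i ∈ s, -(p i * Real.log (p i)) ≤
      p i * Real.log s.card + (1 / (s.card : ℝ) - p i) := by
    intro i hi
    rcases (hp i hi).eq_or_lt with h | h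
    · rw [← h]; simp
    · have h1 := Real.log_le_sub_one_of_pos (x := 1 / (s.card * p i)) (by positivity)
      rw [one_div, Real.log_inv, Real.log_mul hN.ne' h.ne'] at h1
      have h2 := mul_le_mul_of_nonneg_left h1 h.le
      have h3 : p i * ((s.card * p i : ℝ)⁻¹ - 1) = 1 / (s.card : ℝ) - p i := by
        field_simp
      rw [h3] at h2
      linarith
  refine (Finset.sum_le_sum key).trans ?_
  rw [Finset.sum_add_distrib, ← Finset.sum_mul, Finset.sum_sub_distrib, hs]
  simp [hN.ne']

theorem upper_bound (ℓ t : ℕ) (hℓ : 1 ≤ ℓ) (ht : 1 ≤ t) (c : ℝ)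
    (α : Finset (Layered ℓ (fun _ => t)) → ℝ) (hα : IsWeighting α)
    (hc : ∀ Q : Set (Layered ℓ (fun _ => t)), Q.Nonempty → c ≤ critExp α Q) :
    c ≤ Real.log 2 / ℓ +
        Real.log ((ℓ : ℝ) - ((ℓ : ℝ) - 1) * (1 / 2) ^ t) / ((ℓ : ℝ) * t) := by
  refine (hc Set.univ ⟨⟨⟨0, hℓ⟩, ⟨0, ht⟩⟩, trivial⟩).trans ?_
  have hℓ' : (0 : ℝ) < ℓ := by exact_mod_cast hℓ
  have hℓ1 : (1 : ℝ) ≤ ℓ := by exact_mod_cast hℓ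
  have ht' : (0 : ℝ) < t := by exact_mod_cast ht
  have hA : antichainsIn (Set.univ : Set (Layered ℓ (fun _ => t))) = antichains _ := by
    simp [antichainsIn]
  unfold critExp
  rw [hA, Set.ncard_univ, Nat.card_eq_fintype_card, card_layered]
  rw [Finset.sum_congr rfl (g := fun T => -(α T * Real.log (α T)))
    (fun T hT => by rw [shadowWeight_univ α hT])]
  have h1 := entropy_le _ α hα.1 hα.2.2
  have hpos : 0 < (antichains (Layered ℓ (fun _ => t))).card := by
    rw [Finset.card_pos]
    exact ⟨∅, by rw [mem_antichains]; simp⟩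
  have hpow : ((1 : ℝ) / 2) ^ t ≤ 1 := pow_le_one₀ (by norm_num) (by norm_num)
  have hY : 0 < (ℓ : ℝ) - ((ℓ : ℝ) - 1) * (1 / 2) ^ t := by
    nlinarith
  have h2 : Real.log (antichains (Layered ℓ (fun _ => t))).card ≤
      t * Real.log 2 + Real.log ((ℓ : ℝ) - ((ℓ : ℝ) - 1) * (1 / 2) ^ t) := by
    rw [← Real.log_pow, ← Real.log_mul (by positivity) hY.ne']
    apply Real.log_le_log (by exact_mod_cast hpos)
    have h3 : ((antichains (Layered ℓ (fun _ => t))).card : ℝ) ≤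
        ((ℓ * (2 ^ t - 1) + 1 : ℕ) : ℝ) := by exact_mod_cast card_antichains_le ℓ t
    refine h3.trans (le_of_eq ?_)
    have h4 : (2 : ℝ) ^ t * (1 / 2) ^ t = 1 := by
      rw [← mul_pow]; norm_num
    rw [Nat.cast_add, Nat.cast_mul, Nat.cast_sub Nat.one_le_two_pow]
    push_cast
    linear_combination ((ℓ : ℝ) - 1) * h4
  push_cast
  rw [div_le_iff₀ (by positivity)]
  refine (h1.trans h2).trans (le_of_eq ?_)
  field_simp

theorem shadow_lay {ℓ t : ℕ} {i : Fin ℓ} {S : Finset (Layered ℓ (fun _ => t))}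
    (hS : S ⊆ lay ℓ t i) (Q : Set (Layered ℓ (fun _ => t))) (y : Layered ℓ (fun _ => t))
    (hy : y ∈ lay ℓ t i) :
    y ∈ upperShadow Q (S : Set (Layered ℓ (fun _ => t))) ↔ y ∈ S ∧ y ∈ Q := by
  have hyi := mem_lay.1 hy
  constructor
  · rintro ⟨hQ, ⟨x, hx, hxy⟩, _⟩
    refine ⟨?_, hQ⟩
    have hxi := mem_lay.1 (hS hx)
    rcases layered_le.1 hxy with h | h
    · rw [hxi, hyi] at h; exact absurd h (lt_irrefl _)
    · rw [← h]; exact hx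
  · rintro ⟨hyS, hyQ⟩
    refine ⟨hyQ, ⟨y, hyS, le_rfl⟩, ?_⟩
    intro z _ hzy x hx hxz
    have hxi := mem_lay.1 (hS hx)
    have := layered_lt.1 (hxz.trans_lt hzy)
    rw [hxi, hyi] at this
    exact lt_irrefl _ this

theorem shadow_mem {P : Type*} [Fintype P] [PartialOrder P] (Q S : Set P) :
    (upperShadow Q S).toFinset ∈ antichainsIn Q := by
  rw [antichainsIn, Finset.mem_filter, mem_antichains, Set.coe_toFinset]
  refine ⟨?_, fun y hy => hy.1⟩
  intro x hx y hy hne hle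
  obtain ⟨w, hw, hwx⟩ := hx.2.1
  exact hy.2.2 x hx.1 (lt_of_le_of_ne hle hne) w hw hwx

/-- Conditional shadow weight given layer `i`. -/
noncomputable def pw (ℓ t : ℕ) (Q : Set (Layered ℓ (fun _ => t))) (i : Fin ℓ)
    (T : Finset (Layered ℓ (fun _ => t))) : ℝ :=
  (((lay ℓ t i).powerset.filter
    (fun S : Finset (Layered ℓ (fun _ => t)) => upperShadow Q (S : Set _) = (T : Set _))).card : ℝ)
    / 2 ^ t

theorem sum_pw (ℓ t : ℕ) (Q : Set (Layered ℓ (fun _ => t))) (i : Fin ℓ) :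
    ∑ T ∈ antichainsIn Q, pw ℓ t Q i T = 1 := by
  unfold pw
  rw [← Finset.sum_div, div_eq_one_iff_eq (by positivity)]
  have h := Finset.card_eq_sum_card_fiberwise (s := (lay ℓ t i).powerset) (t := antichainsIn Q)
    (f := fun S : Finset (Layered ℓ (fun _ => t)) => (upperShadow Q (S : Set (Layered ℓ (fun _ => t)))).toFinset)
    (fun S _ => shadow_mem Q _)
  rw [Finset.card_powerset, card_lay] at h
  have h' : ((2 ^ t : ℕ) : ℝ) = _ := congrArg Nat.cast h
  push_cast at h'
  rw [h']
  apply Finset.sum_congr rfl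
  intro T _
  congr 2
  apply Finset.filter_congr
  intro S _
  rw [← Finset.coe_inj, Set.coe_toFinset]

theorem pw_le (ℓ t : ℕ) (Q : Set (Layered ℓ (fun _ => t))) (i : Fin ℓ)
    (T : Finset (Layered ℓ (fun _ => t))) :
    pw ℓ t Q i T ≤ ((2 : ℝ) ^ ((lay ℓ t i).filter (· ∈ Q)).card)⁻¹ := by
  have hcard : ((lay ℓ t i).powerset.filter
    (fun S : Finset (Layered ℓ (fun _ => t)) => upperShadow Q (S : Set _) = (T : Set _))).card ≤
      2 ^ ((lay ℓ t i).filter (· ∉ Q)).card := by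
    rw [← Finset.card_powerset]
    apply Finset.card_le_card_of_injOn (fun S => S.filter (· ∉ Q))
    · intro S hS
      have hS := Finset.mem_powerset.1 (Finset.mem_filter.1 hS).1
      exact Finset.mem_powerset.2 (Finset.filter_subset_filter _ hS)
    · intro S hS S' hS' heq
      obtain ⟨h1, h2⟩ := Finset.mem_filter.1 hS
      obtain ⟨h1', h2'⟩ := Finset.mem_filter.1 hS'
      rw [Finset.mem_powerset] at h1 h1'
      ext y
      by_cases hyQ : y ∈ Q
      · by_cases hyl : y ∈ lay ℓ t i
        · have e1 := shadow_lay h1 Q y hyl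
          have e2 := shadow_lay h1' Q y hyl
          rw [h2] at e1
          rw [h2'] at e2
          have := e1.symm.trans e2
          tauto
        · exact ⟨fun h => absurd (h1 h) hyl, fun h => absurd (h1' h) hyl⟩
      · have := Finset.ext_iff.1 heq y
        simp only [Finset.mem_filter] at this
        tauto
  have hsum := Finset.card_filter_add_card_filter_not (s := lay ℓ t i) (· ∈ Q)
  rw [card_lay] at hsum
  unfold pw
  have hpw := congrArg (fun n => (2 : ℝ) ^ n) hsum
  simp only [pow_add] at hpw
  rw [div_le_iff₀ (by positivity), ← hpw, inv_mul_cancel_left₀ (by positivity)]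
  exact_mod_cast hcard

theorem pw_nonneg (ℓ t : ℕ) (Q : Set (Layered ℓ (fun _ => t))) (i : Fin ℓ)
    (T : Finset (Layered ℓ (fun _ => t))) : 0 ≤ pw ℓ t Q i T := by
  unfold pw; positivity

theorem ent_pw (ℓ t : ℕ) (Q : Set (Layered ℓ (fun _ => t))) (i : Fin ℓ) :
    ((lay ℓ t i).filter (· ∈ Q)).card * Real.log 2 ≤
      ∑ T ∈ antichainsIn Q, Real.negMulLog (pw ℓ t Q i T) := by
  have : ∀ T ∈ antichainsIn Q, pw ℓ t Q i T *
      (((lay ℓ t i).filter (· ∈ Q)).card * Real.log 2) ≤ Real.negMulLog (pw ℓ t Q i T) := by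
    intro T _
    rcases (pw_nonneg ℓ t Q i T).eq_or_lt with h | h
    · rw [← h]; simp
    · have h1 := Real.log_le_log h (pw_le ℓ t Q i T)
      rw [Real.log_inv, Real.log_pow] at h1
      rw [Real.negMulLog]
      nlinarith
  refine le_trans (le_of_eq ?_) (Finset.sum_le_sum this)
  rw [← Finset.sum_mul, sum_pw, one_mul]

/-- The weighting for the lower bound. -/
noncomputable def lw (ℓ t : ℕ) (A : Finset (Layered ℓ (fun _ => t))) : ℝ :=
  ∑ i : Fin ℓ, (1 / (ℓ : ℝ)) * (if A ⊆ lay ℓ t i then 1 / 2 ^ t else 0)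

theorem sum_lw (ℓ t : ℕ) (p : Finset (Layered ℓ (fun _ => t)) → Prop) :
    ∑ A ∈ (antichains (Layered ℓ (fun _ => t))).filter p, lw ℓ t A =
      ∑ i : Fin ℓ, (1 / (ℓ : ℝ)) * ((((lay ℓ t i).powerset.filter p).card : ℝ) / 2 ^ t) := by
  unfold lw
  rw [Finset.sum_comm]
  apply Finset.sum_congr rfl
  intro i _
  rw [← Finset.mul_sum, ← Finset.sum_filter, Finset.sum_const, nsmul_eq_mul, mul_one_div]
  congr 4
  ext A
  simp only [Finset.mem_filter, Finset.mem_powerset]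
  constructor
  · rintro ⟨⟨_, h⟩, h'⟩; exact ⟨h', h⟩
  · rintro ⟨h', h⟩; exact ⟨⟨sub_lay_antichain h', h⟩, h'⟩

theorem lw_weighting (ℓ t : ℕ) (hℓ : 1 ≤ ℓ) : IsWeighting (lw ℓ t) := by
  have hℓ' : (0 : ℝ) < ℓ := by exact_mod_cast hℓ
  refine ⟨?_, ?_, ?_⟩
  · intro A _
    unfold lw
    apply Finset.sum_nonneg
    intro i _
    split_ifs <;> positivity
  · intro A hA
    unfold lw
    apply Finset.sum_eq_zero
    intro i _
    rw [if_neg (fun h => hA (sub_lay_antichain h)), mul_zero]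
  · have := sum_lw ℓ t (fun _ => True)
    simp only [Finset.filter_true, Finset.card_powerset, card_lay] at this
    rw [this]
    simp [hℓ'.ne']

theorem lower_bound (ℓ t : ℕ) (hℓ : 1 ≤ ℓ) (Q : Set (Layered ℓ (fun _ => t)))
    (hQ : Q.Nonempty) : Real.log 2 / ℓ ≤ critExp (lw ℓ t) Q := by
  have hℓ' : (0 : ℝ) < ℓ := by exact_mod_cast hℓ
  have hQc : (0 : ℝ) < Q.ncard := by
    exact_mod_cast (Set.ncard_pos (Set.toFinite Q)).2 hQ
  unfold critExp
  rw [le_div_iff₀ hQc]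
  have hcard : Q.ncard = ∑ i : Fin ℓ, ((lay ℓ t i).filter (· ∈ Q)).card := by
    rw [Set.ncard_eq_toFinset_card' Q,
      Finset.card_eq_sum_card_fiberwise (f := fun x : Layered ℓ (fun _ => t) => x.1)
        (t := Finset.univ) (fun _ _ => Finset.mem_coe.2 (Finset.mem_univ _))]
    apply Finset.sum_congr rfl
    intro i _
    congr 1
    ext x
    simp only [Finset.mem_filter, Set.mem_toFinset, mem_lay]
    tauto
  have hsw : ∀ T, shadowWeight (lw ℓ t) Q T = ∑ i : Fin ℓ, (1 / (ℓ : ℝ)) • pw ℓ t Q i T := by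
    intro T
    unfold shadowWeight
    have h := sum_lw ℓ t
      (fun B : Finset (Layered ℓ (fun _ => t)) => upperShadow Q (B : Set _) = (T : Set _))
    simp only [smul_eq_mul, pw]
    convert h
  have hT : ∀ T ∈ antichainsIn Q, ∑ i : Fin ℓ, (1 / (ℓ : ℝ)) • Real.negMulLog (pw ℓ t Q i T) ≤
      -(shadowWeight (lw ℓ t) Q T * Real.log (shadowWeight (lw ℓ t) Q T)) := by
    intro T _
    rw [hsw T]
    have := Real.concaveOn_negMulLog.le_map_sum (t := Finset.univ)
      (w := fun _ : Fin ℓ => 1 / (ℓ : ℝ)) (p := fun i => pw ℓ t Q i T)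
      (fun _ _ => by positivity) (by simp [hℓ'.ne']) (fun i _ => pw_nonneg ℓ t Q i T)
    refine this.trans (le_of_eq ?_)
    rw [Real.negMulLog, neg_mul]
  refine le_trans ?_ (Finset.sum_le_sum hT)
  rw [Finset.sum_comm, hcard]
  push_cast
  rw [Finset.mul_sum]
  apply Finset.sum_le_sum
  intro i _
  rw [← Finset.smul_sum, smul_eq_mul]
  have := mul_le_mul_of_nonneg_left (ent_pw ℓ t Q i) (by positivity : (0 : ℝ) ≤ 1 / ℓ)
  refine le_trans (le_of_eq ?_) this
  ring

end Helpers

/-- For all `ℓ ≥ 1` and `t ≥ 1`, the `t`-fold blow-up `C_ℓ(t) = C(t,…,t)` of the chain of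
length `ℓ` satisfies
`log 2 / ℓ ≤ c_⋆(C_ℓ(t)) ≤ log 2 / ℓ + log(ℓ - (ℓ-1) 2^{-t}) / (ℓ t)`. -/
theorem stmt16 (ℓ t : ℕ) (hℓ : 1 ≤ ℓ) (ht : 1 ≤ t) :
    Real.log 2 / ℓ ≤ critStar (Layered ℓ (fun _ => t)) ∧
    critStar (Layered ℓ (fun _ => t)) ≤
      Real.log 2 / ℓ +
        Real.log ((ℓ : ℝ) - ((ℓ : ℝ) - 1) * (1 / 2) ^ t) / ((ℓ : ℝ) * t) := by
  have hub := upper_bound ℓ t hℓ ht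
  have hmem : Real.log 2 / ℓ ∈ {c : ℝ | 0 ≤ c ∧
      ∃ α : Finset (Layered ℓ (fun _ => t)) → ℝ, IsWeighting α ∧
        ∀ Q : Set (Layered ℓ (fun _ => t)), Q.Nonempty → c ≤ critExp α Q} :=
    ⟨by positivity, lw ℓ t, lw_weighting ℓ t hℓ, lower_bound ℓ t hℓ⟩
  constructor
  · exact le_csSup ⟨_, fun c hc => by
      obtain ⟨_, α, h1, h2⟩ := hc
      exact hub c α h1 h2⟩ hmem
  · refine csSup_le ⟨_, hmem⟩ ?_
    rintro c ⟨_, α, h1, h2⟩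
    exact hub c α h1 h2
end
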